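/- There exists a unique family (e_i')_{i∈I} of K-linear endomorphisms of U_q^-(g) such that e_i'(1)=0 and e_i'(f_j a) = δ_{ij} a + q^{-(α_i,α_j)} f_j e_i'(a) for all i,j∈I and a∈U_q^-(g) (i.e. the commutation relation e_i' f_j = q^{-(α_i,α_j)} f_j e_i' + δ_{ij} holds between e_i' and left multiplication by f_j). Moreover these operators satisfy the twisted Leibniz rule e_i'(ab) = e_i'(a)b + Ad(t_i)(a)·e_i'(b) for all a,b∈U_q^-(g) with a homogeneous. -/

import Mathlib

noncomputable section
open scoped BigOperators

abbrev KK : Type := RatFunc ℚ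

def qq : KK := RatFunc.X

def qZ (n : ℤ) : KK := qq ^ n

def qInt (d : ℤ) (k : ℕ) : KK := (qq ^ (d * k) - qq ^ (-(d * k : ℤ))) / (qq ^ d - qq ^ (-d : ℤ))

def qFact (d : ℤ) (k : ℕ) : KK := ∏ m ∈ Finset.range k, qInt d (m + 1)

variable {I : Type} [DecidableEq I]

/-- `b = 1 - (α_i^∨, α_j)` -/
def serreN (A : I → I → ℤ) (i j : I) : ℕ := (1 - 2 * A i j / A i i).toNat

def fSerre (A : I → I → ℤ) (i j : I) : FreeAlgebra KK I :=
  ∑ k ∈ Finset.range (serreN A i j + 1),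
    ((-1 : KK) ^ k * (qFact (A i i / 2) k)⁻¹ * (qFact (A i i / 2) (serreN A i j - k))⁻¹) •
      ((FreeAlgebra.ι KK i) ^ k * FreeAlgebra.ι KK j * (FreeAlgebra.ι KK i) ^ (serreN A i j - k))

inductive SerreRel (A : I → I → ℤ) : FreeAlgebra KK I → FreeAlgebra KK I → Prop
  | serre (i j : I) (h : i ≠ j) : SerreRel A (fSerre A i j) 0

abbrev Um (A : I → I → ℤ) : Type := RingQuot (SerreRel A)

def fgen (A : I → I → ℤ) (i : I) : Um A := RingQuot.mkAlgHom KK (SerreRel A) (FreeAlgebra.ι KK i)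

def IsWt (A : I → I → ℤ) (ν : I →₀ ℕ) (a : Um A) : Prop :=
  a ∈ Submodule.span KK {x | ∃ L : List I, (∀ i, L.count i = ν i) ∧ x = (L.map (fgen A)).prod}

def IsCartan (A : I → I → ℤ) : Prop :=
  (∀ i j, A i j = A j i) ∧ (∀ i, 0 < A i i) ∧ (∀ i, 2 ∣ A i i) ∧
  (∀ i j, i ≠ j → A i j ≤ 0) ∧ (∀ i j, A i i ∣ 2 * A i j)

def EprimRel (A : I → I → ℤ) (E : I → Module.End KK (Um A)) : Prop :=
  (∀ i, E i 1 = 0) ∧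
  ∀ i j (a : Um A), E i (fgen A j * a) =
    (if i = j then a else 0) + qZ (-(A i j)) • (fgen A j * (E i a))

section Generic

lemma tele {M : Type*} [AddCommGroup M] (n : ℕ) (T P Q : ℕ → M)
    (h : ∀ k ≤ n, T k = P k + Q k) (h0 : P 0 = 0) (hn : Q n = 0)
    (hs : ∀ k < n, P (k + 1) + Q k = 0) : ∑ k ∈ Finset.range (n + 1), T k = 0 := by
  rw [Finset.sum_congr rfl (fun k hk => h k (by simpa [Nat.lt_succ_iff] using hk)),
    Finset.sum_add_distrib, Finset.sum_range_succ', Finset.sum_range_succ, h0, hn, add_zero,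
    add_zero, ← Finset.sum_add_distrib]
  exact Finset.sum_eq_zero (fun k hk => hs k (by simpa using hk))

variable {K R : Type*} [Field K] [Ring R] [Algebra K R]

structure QData (p r : K) (N F : ℕ → K) : Prop where
  pr : p * r = 1
  N0 : N 0 = 0
  Np : ∀ k, N (k + 1) = p * N k + r ^ k
  Nadd : ∀ k m, N (k + m) = r ^ m * N k + p ^ k * N m
  Nne : ∀ k, N (k + 1) ≠ 0
  Fne : ∀ k, F k ≠ 0
  Fs : ∀ k, F (k + 1) = F k * N (k + 1)

def cc (F : ℕ → K) (n k : ℕ) : K := (-1) ^ k * (F k)⁻¹ * (F (n - k))⁻¹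

lemma QData.cN {p r : K} {N F : ℕ → K} (h : QData p r N F) (k m : ℕ) :
    cc F (k + m + 1) (k + 1) * N (k + 1) = - (cc F (k + m + 1) k * N (m + 1)) := by
  have h1 : k + m + 1 - (k + 1) = m := by omega
  have h2 : k + m + 1 - k = m + 1 := by omega
  have := h.Fne k
  have := h.Fne m
  have := h.Nne k
  have := h.Nne m
  simp only [cc, h1, h2, h.Fs]
  field_simp
  ring

lemma QData.geom {p r : K} {N F : ℕ → K} (h : QData p r N F) (k : ℕ) :
    ∑ m ∈ Finset.range k, (r ^ 2) ^ m = p * r ^ k * N k := by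
  induction k with
  | zero => simp [h.N0]
  | succ k ih =>
    rw [Finset.sum_range_succ, ih, h.Np, pow_succ]
    have := h.pr
    linear_combination (- r ^ k * p * N k - r ^ k * r ^ k) * this

lemma QData.binom {p r : K} {N F : ℕ → K} (h : QData p r N F) (n : ℕ) :
    ∑ k ∈ Finset.range (n + 1 + 1), cc F (n + 1) k * (p ^ n) ^ k = 0 := by
  have hN := h.Nne n
  apply (mul_eq_zero.1 (?_ : N (n + 1) * _ = 0)).resolve_left hN
  rw [Finset.mul_sum]
  apply tele (n + 1) _ (fun k => cc F (n + 1) k * (p ^ n) ^ k * r ^ (n + 1 - k) * N k)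
    (fun k => cc F (n + 1) k * (p ^ n) ^ k * p ^ k * N (n + 1 - k))
  · intro k hk
    obtain ⟨m, hm⟩ := Nat.exists_eq_add_of_le hk
    rw [hm, h.Nadd]
    simp only [Nat.add_sub_cancel_left]
    ring
  · simp [h.N0]
  · simp [h.N0]
  · intro k hk
    obtain ⟨m, rfl⟩ := Nat.exists_eq_add_of_le (Nat.lt_succ_iff.1 hk)
    have h1 : k + m + 1 - (k + 1) = m := by omega
    have h2 : k + m + 1 - k = m + 1 := by omega
    simp only [h1, h2]
    have e := h.cN k m
    have e2 : p ^ m * r ^ m = 1 := by rw [← mul_pow, h.pr, one_pow]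
    rw [pow_succ (p ^ (k + m)) k]
    have e3 : p ^ (k + m) = p ^ k * p ^ m := pow_add _ _ _
    generalize (p ^ (k + m)) ^ k = z
    rw [e3]
    linear_combination z * p ^ k * p ^ m * r ^ m * e - z * p ^ k * cc F (k + m + 1) k * N (m + 1) * e2

lemma Xpow (x : R) (s ε : K) (k : ℕ) :
    (!![s • x, algebraMap K R ε; 0, x]) ^ k =
      !![s ^ k • x ^ k, (ε * ∑ m ∈ Finset.range k, s ^ m) • x ^ (k - 1); 0, x ^ k] := by
  induction k with
  | zero => simp [Matrix.one_fin_two]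
  | succ k ih =>
    rw [pow_succ', ih, Matrix.mul_fin_two]
    congr 1
    cases k with
    | zero => simp [Algebra.algebraMap_eq_smul_one]
    | succ k =>
      rw [Finset.sum_range_succ' _ (k + 1)]
      simp [Algebra.algebraMap_eq_smul_one, pow_succ' x, pow_succ' s, smul_smul, mul_assoc,
        ← add_smul, ← Finset.mul_sum]
      constructor
      · congr 1; ring
      · congr 1; ring

lemma XYX (x y : R) (s t ε η : K) (k m : ℕ) :
    (!![s • x, algebraMap K R ε; 0, x]) ^ k * !![t • y, algebraMap K R η; 0, y] *
      (!![s • x, algebraMap K R ε; 0, x]) ^ m =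
      !![(s ^ (k + m) * t) • (x ^ k * y * x ^ m),
        (s ^ k * t * ε * ∑ l ∈ Finset.range m, s ^ l) • (x ^ k * y * x ^ (m - 1))
        + (η * s ^ k) • x ^ (k + m)
        + (ε * ∑ l ∈ Finset.range k, s ^ l) • (x ^ (k - 1) * y * x ^ m);
        0, x ^ k * y * x ^ m] := by
  rw [Xpow, Xpow, Matrix.mul_fin_two, Matrix.mul_fin_two]
  simp only [Algebra.algebraMap_eq_smul_one, smul_mul_assoc, mul_smul_comm, smul_smul, mul_zero,
    zero_mul, add_zero, zero_add, mul_one, smul_zero, add_mul, smul_add, pow_add x]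
  have e1 : ∀ g : K, s ^ k * t * ε * g = ε * g * (t * s ^ k) := fun g => by ring
  have e2 : s ^ (k + m) * t = s ^ m * (t * s ^ k) := by ring
  rw [e1, e2, add_assoc]

lemma key {p r : K} {N F : ℕ → K} (h : QData p r N F) (n : ℕ) (x y : R)
    (hser : ∑ k ∈ Finset.range (n + 1 + 1), cc F (n + 1) k • (x ^ k * y * x ^ (n + 1 - k)) = 0)
    (s t ε η : K)
    (hh : (ε = 0 ∧ η = 0) ∨ (ε = 1 ∧ η = 0 ∧ s = r ^ 2 ∧ t = p ^ n) ∨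
      (ε = 0 ∧ η = 1 ∧ s = p ^ n)) :
    ∑ k ∈ Finset.range (n + 1 + 1), cc F (n + 1) k •
      ((!![s • x, algebraMap K R ε; 0, x]) ^ k * !![t • y, algebraMap K R η; 0, y] *
      (!![s • x, algebraMap K R ε; 0, x]) ^ (n + 1 - k)) = 0 := by
  simp only [XYX]
  ext a b
  rw [Matrix.sum_apply]
  fin_cases a <;> fin_cases b
  · simp only [Matrix.smul_apply, Matrix.of_apply, Matrix.cons_val', Matrix.cons_val_zero,
      Fin.zero_eta, Matrix.zero_apply]
    have : ∀ k ∈ Finset.range (n + 1 + 1), cc F (n + 1) k • (s ^ (k + (n + 1 - k)) * t) •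
        (x ^ k * y * x ^ (n + 1 - k)) =
        (s ^ (n + 1) * t) • (cc F (n + 1) k • (x ^ k * y * x ^ (n + 1 - k))) := by
      intro k hk
      rw [Nat.add_sub_cancel' (by simpa [Nat.lt_succ_iff] using hk), smul_comm]
    refine (Finset.sum_congr rfl this).trans ?_
    rw [← Finset.smul_sum, hser, smul_zero]
  · simp only [Fin.zero_eta, Fin.mk_one, Matrix.smul_apply, Matrix.of_apply, Matrix.cons_val',
      Matrix.cons_val_zero, Matrix.cons_val_one, Matrix.zero_apply, Matrix.cons_val_fin_one]
    rcases hh with ⟨rfl, rfl⟩ | ⟨rfl, rfl, rfl, rfl⟩ | ⟨rfl, rfl, rfl⟩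
    · simp
    · simp only [h.geom]
      apply tele (n + 1) _
        (fun k => (cc F (n + 1) k * (p * r ^ k * N k)) • (x ^ (k - 1) * y * x ^ (n + 1 - k)))
        (fun k => (cc F (n + 1) k * ((r ^ 2) ^ k * p ^ n * (p * r ^ (n + 1 - k) * N (n + 1 - k)))) •
          (x ^ k * y * x ^ (n + 1 - k - 1)))
      · intro k hk
        simp only [zero_mul, zero_smul, add_zero, mul_one, one_mul, smul_add, smul_smul]
        rw [add_comm]
      · simp [h.N0]
      · simp [h.N0]
      · intro k hk
        obtain ⟨m, rfl⟩ := Nat.exists_eq_add_of_le (Nat.lt_succ_iff.1 hk)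
        have h1 : k + m + 1 - (k + 1) = m := by omega
        have h2 : k + m + 1 - k = m + 1 := by omega
        simp only [h1, h2, Nat.add_sub_cancel]
        rw [← add_smul]
        convert zero_smul K _
        have e := h.cN k m
        have e2 : p ^ m * r ^ m = 1 := by rw [← mul_pow, h.pr, one_pow]
        have e4 : p ^ k * r ^ k = 1 := by rw [← mul_pow, h.pr, one_pow]
        rw [pow_add p, ← pow_mul, mul_comm 2 k, pow_mul, pow_succ r k, pow_succ r m]
        linear_combination (p * r ^ k * r) * e + p * r ^ k * r * cc F (k + m + 1) k * N (m + 1) *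
          (p ^ m * r ^ m * e4 + e2)
    · have : ∀ k ∈ Finset.range (n + 1 + 1), cc F (n + 1) k •
        (((p ^ n) ^ k * t * 0 * ∑ l ∈ Finset.range (n + 1 - k), (p ^ n) ^ l) •
          (x ^ k * y * x ^ (n + 1 - k - 1))
        + ((1 : K) * (p ^ n) ^ k) • x ^ (k + (n + 1 - k))
        + ((0 : K) * ∑ l ∈ Finset.range k, (p ^ n) ^ l) • (x ^ (k - 1) * y * x ^ (n + 1 - k))) =
        (cc F (n + 1) k * (p ^ n) ^ k) • x ^ (n + 1) := by
        intro k hk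
        rw [Nat.add_sub_cancel' (by simpa [Nat.lt_succ_iff] using hk)]
        simp [smul_smul]
      refine (Finset.sum_congr rfl this).trans ?_
      rw [← Finset.sum_smul, h.binom, zero_smul]
  · simp
  · simpa using hser

end Generic

lemma qq_ne : qq ≠ 0 := RatFunc.X_ne_zero

lemma qq_pow_ne_one (n : ℕ) (hn : 0 < n) : qq ^ n ≠ 1 := by
  intro h
  have : (algebraMap (Polynomial ℚ) (RatFunc ℚ)) (Polynomial.X ^ n) =
      algebraMap (Polynomial ℚ) (RatFunc ℚ) 1 := by
    rw [map_pow, RatFunc.algebraMap_X, map_one]; exact h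
  have := RatFunc.algebraMap_injective ℚ this
  have := congrArg Polynomial.natDegree this
  simp at this
  omega

lemma qdata (d : ℤ) (hd : 0 < d) :
    QData (qq ^ d) (qq ^ (-d)) (qInt d) (qFact d) := by
  obtain ⟨e, rfl⟩ := Int.eq_ofNat_of_zero_le hd.le
  have he : 0 < e := by exact_mod_cast hd
  have hq := qq_ne
  set p : KK := qq ^ e with hp
  have hp0 : p ≠ 0 := pow_ne_zero _ hq
  have hN : ∀ k, qInt (e : ℤ) k = (p ^ k - p⁻¹ ^ k) / (p - p⁻¹) := by
    intro k
    have : ((e : ℤ) * k) = ((e * k : ℕ) : ℤ) := by push_cast; rfl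
    rw [qInt, this, zpow_neg, zpow_neg, zpow_natCast, zpow_natCast, pow_mul, inv_pow]
  have hk : ∀ k, 0 < k → p ^ k - p⁻¹ ^ k ≠ 0 := by
    intro k hk h0
    have : p ^ k * p⁻¹ ^ k = 1 := by rw [← mul_pow, mul_inv_cancel₀ hp0, one_pow]
    rw [← sub_eq_zero.1 h0, hp, ← pow_mul, ← pow_add] at this
    exact qq_pow_ne_one _ (by positivity) this
  have h1 : p - p⁻¹ ≠ 0 := by simpa using hk 1 one_pos
  have hNne : ∀ k, qInt (e : ℤ) (k + 1) ≠ 0 := fun k => by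
    rw [hN]; exact div_ne_zero (hk _ k.succ_pos) h1
  have hpp : p * p⁻¹ = 1 := mul_inv_cancel₀ hp0
  rw [zpow_neg, zpow_natCast]
  constructor
  · exact hpp
  · simp [hN]
  · intro k
    rw [hN, hN, div_eq_iff h1, add_mul, mul_assoc, div_mul_cancel₀ _ h1]
    ring
  · intro k m
    rw [hN, hN, hN, ← mul_div_assoc, ← mul_div_assoc, ← add_div]
    congr 1
    ring
  · exact hNne
  · intro k
    exact Finset.prod_ne_zero_iff.2 fun m _ => hNne m
  · intro k
    rw [qFact, Finset.prod_range_succ]; rfl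

def PhiGen (A : I → I → ℤ) (l i : I) : Matrix (Fin 2) (Fin 2) (Um A) :=
  !![qZ (-(A l i)) • fgen A i, algebraMap KK (Um A) (if l = i then 1 else 0); 0, fgen A i]

lemma serre_zero (A : I → I → ℤ) (i j : I) (h : i ≠ j) :
    ∑ k ∈ Finset.range (serreN A i j + 1), cc (qFact (A i i / 2)) (serreN A i j) k •
      (fgen A i ^ k * fgen A j * fgen A i ^ (serreN A i j - k)) = 0 := by
  have := RingQuot.mkAlgHom_rel KK (SerreRel.serre (A := A) i j h)
  simpa only [cc, fgen, fSerre, map_sum, map_smul, map_mul, map_pow, map_zero] using this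

lemma phi_serre (A : I → I → ℤ) (hA : IsCartan A) (l i j : I) (h : i ≠ j) :
    ∑ k ∈ Finset.range (serreN A i j + 1), cc (qFact (A i i / 2)) (serreN A i j) k •
      (PhiGen A l i ^ k * PhiGen A l j * PhiGen A l i ^ (serreN A i j - k)) = 0 := by
  obtain ⟨hsym, hpos, heven, hneg, hdvd⟩ := hA
  have hs := serre_zero A i j h
  obtain ⟨d, hd⟩ := heven i
  have hd0 : 0 < d := by have := hpos i; omega
  have hdd : A i i / 2 = d := by omega
  obtain ⟨c, hc⟩ := hdvd i j
  have hcA : A i j = c * d := by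
    rw [hd] at hc; linarith
  have hc0 : c ≤ 0 := by
    have := hneg i j h
    by_contra hcon
    push Not at hcon
    nlinarith
  obtain ⟨n, hn⟩ := Int.eq_ofNat_of_zero_le (neg_nonneg.2 hc0)
  have hN : serreN A i j = n + 1 := by
    rw [serreN, hc, Int.mul_ediv_cancel_left _ (hpos i).ne']; omega
  have hAij : -(A i j) = d * n := by
    rw [hcA, ← hn]; ring
  have hqn : qZ (-(A i j)) = (qq ^ d) ^ n := by
    rw [qZ, hAij, zpow_mul, zpow_natCast]
  rw [hdd, hN] at hs ⊢
  refine key (qdata d hd0) n (fgen A i) (fgen A j) hs _ _ _ _ ?_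
  by_cases h1 : l = i
  · subst h1
    right; left
    refine ⟨by simp, by simp [h], ?_, hqn⟩
    rw [qZ, hd, ← zpow_natCast, ← zpow_mul]; congr 1; push_cast; ring
  · by_cases h2 : l = j
    · subst h2
      right; right
      exact ⟨by simp [h1], by simp, by rw [hsym]; exact hqn⟩
    · left; simp [h1, h2]

def Phi (A : I → I → ℤ) (hA : IsCartan A) (l : I) : Um A →ₐ[KK] Matrix (Fin 2) (Fin 2) (Um A) :=
  RingQuot.liftAlgHom KK ⟨FreeAlgebra.lift KK (PhiGen A l), by
    rintro _ _ ⟨i, j, h⟩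
    have := phi_serre A hA l i j h
    simpa only [cc, fSerre, map_sum, map_smul, map_mul, map_pow, map_zero, FreeAlgebra.lift_ι_apply]
      using this⟩

lemma Phi_fgen (A : I → I → ℤ) (hA : IsCartan A) (l i : I) :
    Phi A hA l (fgen A i) = PhiGen A l i := by
  rw [Phi, fgen, RingQuot.liftAlgHom_mkAlgHom_apply, FreeAlgebra.lift_ι_apply]

lemma Um_ind (A : I → I → ℤ) (C : Um A → Prop) (h1 : ∀ r, C (algebraMap KK _ r))
    (hf : ∀ i, C (fgen A i)) (hm : ∀ a b, C a → C b → C (a * b))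
    (ha : ∀ a b, C a → C b → C (a + b)) (a : Um A) : C a := by
  obtain ⟨x, rfl⟩ := RingQuot.mkAlgHom_surjective KK (SerreRel A) a
  induction x using FreeAlgebra.induction with
  | grade0 r => rw [AlgHom.commutes]; exact h1 r
  | grade1 i => exact hf i
  | mul a b iha ihb => rw [map_mul]; exact hm _ _ iha ihb
  | add a b iha ihb => rw [map_add]; exact ha _ _ iha ihb

lemma Phi_row (A : I → I → ℤ) (hA : IsCartan A) (l : I) (a : Um A) :
    Phi A hA l a 1 0 = 0 ∧ Phi A hA l a 1 1 = a := by
  induction a using Um_ind with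
  | h1 r => rw [AlgHom.commutes]; simp [Matrix.algebraMap_matrix_apply]
  | hf i => rw [Phi_fgen]; simp [PhiGen]
  | hm a b iha ihb =>
    rw [map_mul]
    simp [Matrix.mul_apply, Fin.sum_univ_two, iha, ihb]
  | ha a b iha ihb => rw [map_add]; simp [iha, ihb]

lemma leib_list (A : I → I → ℤ) (E : I → Module.End KK (Um A)) (hE : EprimRel A E) (i : I)
    (b : Um A) (L : List I) :
    E i ((L.map (fgen A)).prod * b) = E i (L.map (fgen A)).prod * b
      + qZ (-(L.map (A i)).sum) • ((L.map (fgen A)).prod * E i b) := by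
  induction L with
  | nil => simp [hE.1, qZ]
  | cons j L ih =>
    simp only [List.map_cons, List.prod_cons, List.sum_cons]
    rw [mul_assoc, hE.2, ih, hE.2, neg_add]
    have : qZ (-A i j + -(L.map (A i)).sum) = qZ (-A i j) * qZ (-(L.map (A i)).sum) :=
      zpow_add₀ qq_ne _ _
    rw [this, mul_add, smul_add, add_mul, mul_smul_comm, smul_smul, smul_mul_assoc]
    simp only [mul_assoc, ite_mul, zero_mul, add_assoc]

lemma list_sum (w : I → ℤ) (L : List I) (ν : I →₀ ℕ) (h : ∀ i, L.count i = ν i) :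
    (L.map w).sum = ∑ j ∈ ν.support, (ν j : ℤ) * w j := by
  rw [Finset.sum_list_map_count]
  have : L.toFinset = ν.support := by
    ext i; rw [List.mem_toFinset, Finsupp.mem_support_iff, ← h, ← List.count_pos_iff]; omega
  rw [this]
  exact Finset.sum_congr rfl fun j _ => by rw [h]; simp

theorem stmt0 (A : I → I → ℤ) (hA : IsCartan A) :
    (∃! E : I → Module.End KK (Um A), EprimRel A E) ∧
    (∀ E : I → Module.End KK (Um A), EprimRel A E →
      ∀ i (ν : I →₀ ℕ) (a b : Um A), IsWt A ν a →
        E i (a * b) = E i a * b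
          + (qZ (-(∑ j ∈ ν.support, (ν j : ℤ) * A i j)) • a) * E i b) := by
  have hex : EprimRel A (fun l => (Matrix.entryLinearMap KK (Um A) (0 : Fin 2) (1 : Fin 2)) ∘ₗ (Phi A hA l).toLinearMap) := by
    constructor
    · intro i
      simp
    · intro i j a
      have := Phi_row A hA i a
      simp only [LinearMap.comp_apply, AlgHom.toLinearMap_apply, Matrix.entryLinearMap_apply, map_mul,
        Phi_fgen, Matrix.mul_apply, Fin.sum_univ_two, this.2]
      rw [add_comm]
      simp [PhiGen]
  refine ⟨⟨_, hex, ?_⟩, ?_⟩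
  · intro E' hE'
    have key : ∀ E F : I → Module.End KK (Um A), EprimRel A E → EprimRel A F →
        ∀ i, ∀ a b : Um A, E i b = F i b → E i (a * b) = F i (a * b) := by
      intro E F hE hF i a
      induction a using Um_ind with
      | h1 r =>
        intro b hb
        rw [← Algebra.smul_def, map_smul, map_smul, hb]
      | hf j => intro b hb; rw [hE.2, hF.2, hb]
      | hm a c iha ihc => intro b hb; rw [mul_assoc]; exact iha _ (ihc _ hb)
      | ha a c iha ihc => intro b hb; rw [add_mul, map_add, map_add, iha _ hb, ihc _ hb]
    funext i
    refine LinearMap.ext fun a => ?_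
    have := key _ _ hE' hex i a 1 (by rw [hE'.1, hex.1])
    rwa [mul_one] at this
  · intro E hE i ν a b ha
    rw [smul_mul_assoc]
    induction ha using Submodule.span_induction with
    | mem x hx =>
      obtain ⟨L, hL, rfl⟩ := hx
      rw [leib_list A E hE, list_sum (A i) L ν hL]
    | zero => simp
    | add x y _ _ hx hy =>
      rw [add_mul, map_add, hx, hy, map_add, add_mul, add_mul, smul_add]; abel
    | smul c x _ hx =>
      rw [smul_mul_assoc, map_smul, hx, map_smul, smul_mul_assoc, smul_mul_assoc, smul_add,
        smul_comm c]
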